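/- Let S be a nonempty finite set, P and Q probability vectors on S, and d : S × S → ℝ a cost function. Let TV(P,Q) = (1/2)·Σ_{s∈S} |P(s) − Q(s)|. Then W₁(P,Q;d) ≤ TV(P,Q)·max_{s,s'∈S} d(s,s') + (1 − TV(P,Q))·max_{s∈S} d(s,s). -/

import Mathlib

/-!
The mass `P ⊓ Q` shared by `P` and `Q` stays in place, at a cost of at most `⨆ s, d s s` per unit.
The excess `P - P ⊓ Q` is sent to the deficit `Q - P ⊓ Q` by their normalized product, at a cost of
at most `⨆ s, ⨆ t, d s t` per unit. The total variation distance is exactly the mass that moves.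
-/

open scoped BigOperators

noncomputable section

/-- The (finite, linear-programming) 1-Wasserstein distance between probability
vectors `P` on `S₁` and `Q` on `S₂` with cost function `d`. -/
def W1 {S₁ S₂ : Type*} [Fintype S₁] [Fintype S₂]
    (P : S₁ → ℝ) (Q : S₂ → ℝ) (d : S₁ → S₂ → ℝ) : ℝ :=
  sInf { c : ℝ | ∃ lam : S₁ → S₂ → ℝ,
    (∀ i j, 0 ≤ lam i j) ∧ (∀ i, ∑ j, lam i j = P i) ∧
    (∀ j, ∑ i, lam i j = Q j) ∧ c = ∑ i, ∑ j, lam i j * d i j }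

section Coupling

variable {S₁ S₂ : Type*} [Fintype S₁] [Fintype S₂]

/-- The total cost of the transport plan `lam`, when moving a unit of mass from `i` to `j`
costs `d i j`. -/
def transportCost (lam d : S₁ → S₂ → ℝ) : ℝ :=
  ∑ i, ∑ j, lam i j * d i j

/-- `lam` is a coupling of the finite mass vectors `P` and `Q`. Their total mass is not fixed, so
that the two parts of a plan are themselves couplings. -/
structure IsCoupling (P : S₁ → ℝ) (Q : S₂ → ℝ) (lam : S₁ → S₂ → ℝ) : Prop where
  nonneg : ∀ i j, 0 ≤ lam i j
  sum_row : ∀ i, ∑ j, lam i j = P i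
  sum_col : ∀ j, ∑ i, lam i j = Q j

theorem transportCost_add (lam₁ lam₂ d : S₁ → S₂ → ℝ) :
    transportCost (lam₁ + lam₂) d = transportCost lam₁ d + transportCost lam₂ d := by
  simp only [transportCost, Pi.add_apply, add_mul, Finset.sum_add_distrib]

theorem IsCoupling.add {P₁ P₂ : S₁ → ℝ} {Q₁ Q₂ : S₂ → ℝ} {lam₁ lam₂ : S₁ → S₂ → ℝ}
    (h₁ : IsCoupling P₁ Q₁ lam₁) (h₂ : IsCoupling P₂ Q₂ lam₂) :
    IsCoupling (P₁ + P₂) (Q₁ + Q₂) (lam₁ + lam₂) where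
  nonneg i j := add_nonneg (h₁.nonneg i j) (h₂.nonneg i j)
  sum_row i := by
    simp only [Pi.add_apply, Finset.sum_add_distrib, h₁.sum_row, h₂.sum_row]
  sum_col j := by
    simp only [Pi.add_apply, Finset.sum_add_distrib, h₁.sum_col, h₂.sum_col]

/-- For `P = Q = 0` the plan is zero because of the convention `x / 0 = 0`. -/
theorem isCoupling_prod {P : S₁ → ℝ} {Q : S₂ → ℝ} (hP : 0 ≤ P) (hQ : 0 ≤ Q)
    (hPQ : ∑ i, P i = ∑ j, Q j) :
    IsCoupling P Q fun i j ↦ P i * Q j / ∑ k, P k where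
  nonneg i j := div_nonneg (mul_nonneg (hP i) (hQ j)) (Fintype.sum_nonneg hP)
  sum_row i := by
    rw [← Finset.sum_div, ← Finset.mul_sum, ← hPQ]
    exact mul_div_cancel_of_imp fun h ↦
      congrFun ((Fintype.sum_eq_zero_iff_of_nonneg hP).1 h) i
  sum_col j := by
    rw [← Finset.sum_div, ← Finset.sum_mul, hPQ, mul_comm]
    exact mul_div_cancel_of_imp fun h ↦
      congrFun ((Fintype.sum_eq_zero_iff_of_nonneg hQ).1 h) j

theorem IsCoupling.transportCost_le {P : S₁ → ℝ} {Q : S₂ → ℝ} {lam d : S₁ → S₂ → ℝ} {M : ℝ}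
    (h : IsCoupling P Q lam) (hd : ∀ i j, d i j ≤ M) :
    transportCost lam d ≤ (∑ i, P i) * M :=
  calc transportCost lam d
      ≤ ∑ i, ∑ j, lam i j * M := by
        unfold transportCost
        gcongr with i _ j _
        exacts [h.nonneg i j, hd i j]
    _ = (∑ i, P i) * M := by simp only [← Finset.sum_mul, h.sum_row]

theorem IsCoupling.neg_le_transportCost {P : S₁ → ℝ} {Q : S₂ → ℝ} {lam : S₁ → S₂ → ℝ}
    (h : IsCoupling P Q lam) (d : S₁ → S₂ → ℝ) :
    -∑ i, ∑ j, P i * |d i j| ≤ transportCost lam d := by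
  simp only [transportCost, ← Finset.sum_neg_distrib]
  gcongr with i _ j _
  have hle : lam i j ≤ P i :=
    (Finset.single_le_sum (fun j _ ↦ h.nonneg i j) (Finset.mem_univ j)).trans_eq (h.sum_row i)
  calc -(P i * |d i j|) ≤ -(lam i j * |d i j|) := by gcongr
    _ = lam i j * -|d i j| := (mul_neg _ _).symm
    _ ≤ lam i j * d i j := mul_le_mul_of_nonneg_left (neg_abs_le _) (h.nonneg i j)

theorem IsCoupling.W1_le {P : S₁ → ℝ} {Q : S₂ → ℝ} {lam : S₁ → S₂ → ℝ}
    (h : IsCoupling P Q lam) (d : S₁ → S₂ → ℝ) : W1 P Q d ≤ transportCost lam d := by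
  refine csInf_le ⟨-∑ i, ∑ j, P i * |d i j|, ?_⟩ ⟨lam, h.nonneg, h.sum_row, h.sum_col, rfl⟩
  rintro _ ⟨lam', hnonneg, hrow, hcol, rfl⟩
  exact IsCoupling.neg_le_transportCost ⟨hnonneg, hrow, hcol⟩ d

end Coupling

section Diagonal

variable {S : Type*} [Fintype S] [DecidableEq S]

theorem isCoupling_diagonal {m : S → ℝ} (hm : 0 ≤ m) :
    IsCoupling m m fun i ↦ Pi.single i (m i) where
  nonneg i := show (0 : S → ℝ) ≤ Pi.single i (m i) from Pi.single_nonneg.2 (hm i)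
  sum_row i := Fintype.sum_pi_single' i (m i)
  sum_col j := Fintype.sum_pi_single j m

theorem transportCost_diagonal (m : S → ℝ) (d : S → S → ℝ) :
    transportCost (fun i ↦ Pi.single i (m i)) d = ∑ i, m i * d i i := by
  simp [transportCost, Pi.single_apply]

end Diagonal

section TotalVariation

variable {S : Type*} [Fintype S]

/-- The total variation distance between finite mass vectors, as half their `ℓ¹` distance. -/
def tvDist (P Q : S → ℝ) : ℝ :=
  (1 / 2) * ∑ s, |P s - Q s|

theorem sum_inf_eq_sum_sub_tvDist {P Q : S → ℝ} (h : ∑ s, P s = ∑ s, Q s) :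
    ∑ s, (P ⊓ Q) s = ∑ s, P s - tvDist P Q := by
  have hinf (s : S) : (P ⊓ Q) s = (1 / 2) * (P s + Q s - |P s - Q s|) := by
    simpa [abs_sub_comm] using inf_eq_half_smul_add_sub_abs_sub' ℝ (P s) (Q s)
  simp only [hinf, tvDist, ← Finset.mul_sum, Finset.sum_sub_distrib, Finset.sum_add_distrib, ← h]
  ring

theorem sum_sub_inf_eq_tvDist {P Q : S → ℝ} (h : ∑ s, P s = ∑ s, Q s) :
    ∑ s, (P - P ⊓ Q) s = tvDist P Q := by
  simp only [Pi.sub_apply, Finset.sum_sub_distrib, sum_inf_eq_sum_sub_tvDist h, sub_sub_cancel]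

theorem W1_le_tv_bound_general (P Q : S → ℝ) (hP : 0 ≤ P) (hQ : 0 ≤ Q)
    (hPQ : ∑ s, P s = ∑ s, Q s) (d : S → S → ℝ) :
    W1 P Q d ≤
      tvDist P Q * (⨆ s : S, ⨆ s' : S, d s s') + (∑ s, P s - tvDist P Q) * ⨆ s : S, d s s := by
  classical
  have hshared : 0 ≤ P ⊓ Q := le_inf hP hQ
  have hmass : ∑ s, (P - P ⊓ Q) s = ∑ s, (Q - P ⊓ Q) s := by
    simp only [Pi.sub_apply, Finset.sum_sub_distrib, hPQ]
  have hmove := isCoupling_prod (sub_nonneg.2 inf_le_left) (sub_nonneg.2 inf_le_right) hmass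
  have hplan := hmove.add (isCoupling_diagonal hshared)
  rw [sub_add_cancel, sub_add_cancel] at hplan
  refine (hplan.W1_le d).trans ?_
  rw [transportCost_add, transportCost_diagonal]
  refine add_le_add ?move ?stay
  case move =>
    rw [← sum_sub_inf_eq_tvDist hPQ]
    exact hmove.transportCost_le fun s s' ↦
      (Finite.le_ciSup (d s) s').trans (Finite.le_ciSup (fun s ↦ ⨆ s', d s s') s)
  case stay =>
    rw [← sum_inf_eq_sum_sub_tvDist hPQ, Finset.sum_mul]
    gcongr with s
    exacts [hshared s, Finite.le_ciSup (fun s ↦ d s s) s]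

end TotalVariation

/-- total-variation bound on the Wasserstein distance. -/
theorem W1_le_tv_bound {S : Type*} [Fintype S] [Nonempty S]
    (P Q : S → ℝ)
    (hP0 : ∀ i, 0 ≤ P i) (hP1 : ∑ i, P i = 1)
    (hQ0 : ∀ j, 0 ≤ Q j) (hQ1 : ∑ j, Q j = 1)
    (d : S → S → ℝ) :
    W1 P Q d ≤
      ((1 / 2) * ∑ s, |P s - Q s|) * (⨆ s : S, ⨆ s' : S, d s s') +
        (1 - (1 / 2) * ∑ s, |P s - Q s|) * ⨆ s : S, d s s := by
  simpa only [tvDist, hP1] using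
    W1_le_tv_bound_general P Q hP0 hQ0 (hP1.trans hQ1.symm) d

end
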